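/- arXiv:1608.05288 — 5 statements merged into one kernel-verified Lean document; each statement's English description precedes it below -/
import Mathlib

section
/- Let (f_i)_{i∈I} be a finite family of cost functions, x a variable, and B ⊆ I a subset such that for every i ∈ I \ B the function f_i does not depend on x. Then min over all complete assignments σ of Σ_{i ∈ I} f_i(σ) equals min over all complete assignments σ of [ Σ_{i ∈ I \ B} f_i(σ) + min_{d ∈ D x} Σ_{i ∈ B} f_i(σ[x := d]) ]. (Correctness of one variable-elimination step of Bucket Elimination: replacing the bucket B of x by the single bucket function π_{-x}(Σ_{i∈B} f_i) preserves the optimal cost.) -/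
open scoped ENNReal

/-- **Correctness of one variable-elimination step of Bucket Elimination.**
If `B ⊆ I` is the bucket of variable `x`, i.e. every `f i` with `i ∉ B` does not
depend on `x`, then the optimal cost `min_σ Σ_{i ∈ I} f i σ` equals
`min_σ (Σ_{i ∈ I \ B} f i σ + min_{d ∈ D x} Σ_{i ∈ B} f i (σ[x := d]))`. -/
theorem bucket_elimination_step_correct
    {V : Type*} [Fintype V] [DecidableEq V]
    {D : V → Type*} [∀ v, Fintype (D v)] [∀ v, Nonempty (D v)]
    {I : Type*} [Fintype I] [DecidableEq I]
    (f : I → (∀ v, D v) → ℝ≥0∞) (x : V) (B : Finset I)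
    (hindep : ∀ i ∉ B, ∀ (σ : ∀ v, D v) (d : D x), f i σ = f i (Function.update σ x d)) :
    (⨅ σ : ∀ v, D v, ∑ i : I, f i σ)
      = ⨅ σ : ∀ v, D v,
          (∑ i ∈ Bᶜ, f i σ + ⨅ d : D x, ∑ i ∈ B, f i (Function.update σ x d)) := by
  apply le_antisymm
  · refine le_iInf fun σ => ?_
    rw [ENNReal.add_iInf]
    refine le_iInf fun d => ?_
    refine (iInf_le _ (Function.update σ x d)).trans (le_of_eq ?_)
    rw [← Finset.sum_compl_add_sum B]
    congr 1
    refine Finset.sum_congr rfl fun i hi => ?_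
    exact (hindep i (Finset.mem_compl.mp hi) σ d).symm
  · refine le_iInf fun σ => (iInf_le _ σ).trans ?_
    rw [← Finset.sum_compl_add_sum B]
    gcongr
    refine (iInf_le _ (σ x)).trans (le_of_eq ?_)
    simp
end

section
/- Let (p_i)_{i∈I} be a finite family of functions from complete assignments to the nonnegative reals, x a variable, and B ⊆ I a subset such that for every i ∈ I \ B the function p_i does not depend on x. Then max over all complete assignments σ of Π_{i ∈ I} p_i(σ) equals max over all complete assignments σ of [ (Π_{i ∈ I \ B} p_i(σ)) · max_{d ∈ D x} Π_{i ∈ B} p_i(σ[x := d]) ]. (Correctness of one variable-elimination step of Bucket Elimination for the Most Probable Explanation task, where the aggregation operator is product and the elimination operator is maximization.) -/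
open scoped NNReal

/-- **Correctness of one variable-elimination step of Bucket Elimination for the
MPE (max-product) task.** If every `p i` with `i ∉ B` does not depend on `x`, then
`max_σ Π_{i ∈ I} p i σ` equals
`max_σ ((Π_{i ∈ I \ B} p i σ) * max_{d ∈ D x} Π_{i ∈ B} p i (σ[x := d]))`. -/
theorem mpe_bucket_elimination_step_correct
    {V : Type*} [Fintype V] [DecidableEq V]
    {D : V → Type*} [∀ v, Fintype (D v)] [∀ v, Nonempty (D v)]
    {I : Type*} [Fintype I] [DecidableEq I]
    (p : I → (∀ v, D v) → ℝ≥0) (x : V) (B : Finset I)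
    (hindep : ∀ i ∉ B, ∀ (σ : ∀ v, D v) (d : D x), p i σ = p i (Function.update σ x d)) :
    (⨆ σ : ∀ v, D v, ∏ i : I, p i σ)
      = ⨆ σ : ∀ v, D v,
          (∏ i ∈ Bᶜ, p i σ) * ⨆ d : D x, ∏ i ∈ B, p i (Function.update σ x d) := by
  have bdd : ∀ f : (∀ v, D v) → ℝ≥0, BddAbove (Set.range f) :=
    fun f => (Set.finite_range f).bddAbove
  have bddx : ∀ f : D x → ℝ≥0, BddAbove (Set.range f) :=
    fun f => (Set.finite_range f).bddAbove
  apply le_antisymm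
  · refine ciSup_le fun σ => ?_
    refine le_trans ?_ (le_ciSup (bdd _) σ)
    rw [← Finset.prod_compl_mul_prod B]
    refine mul_le_mul_right ?_ _
    have h := le_ciSup (bddx fun d => ∏ i ∈ B, p i (Function.update σ x d)) (σ x)
    simpa only [Function.update_eq_self] using h
  · refine ciSup_le fun σ => ?_
    obtain ⟨d, hd⟩ := exists_eq_ciSup_of_finite
      (f := fun d : D x => ∏ i ∈ B, p i (Function.update σ x d))
    rw [← hd]
    refine le_trans (le_of_eq ?_) (le_ciSup (bdd _) (Function.update σ x d))
    rw [← Finset.prod_compl_mul_prod B]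
    congr 1
    exact Finset.prod_congr rfl fun i hi => hindep i (Finset.mem_compl.mp hi) σ d
end

section
/- Let x be a variable, σ a complete assignment, and (p_i)_{i∈I} a finite family of functions from complete assignments to the nonnegative reals. For any partition of I into parts B_1, …, B_m it holds that max_{d ∈ D x} Π_{i ∈ I} p_i(σ[x := d]) ≤ Π_{k=1}^{m} max_{d ∈ D x} Π_{i ∈ B_k} p_i(σ[x := d]). (Eliminating a variable using mini-buckets in the max-product (MPE) setting produces an upper bound on the eliminated bucket function.) -/
open scoped NNReal

/-- **Mini-bucket elimination upper bound in the max-product (MPE) setting.**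
For a variable `x`, a complete assignment `σ`, a finite family of nonnegative
functions `p i`, and any partition of the index set `I` into mini-buckets
`B 1, …, B m`, we have
`max_{d ∈ D x} Π_{i ∈ I} p i (σ[x := d]) ≤ Π_k max_{d ∈ D x} Π_{i ∈ B k} p i (σ[x := d])`. -/
theorem mpe_minibucket_upper_bound
    {V : Type*} [Fintype V] [DecidableEq V]
    {D : V → Type*} [∀ v, Fintype (D v)] [∀ v, Nonempty (D v)]
    {I : Type*} [Fintype I] [DecidableEq I]
    (p : I → (∀ v, D v) → ℝ≥0) (x : V) (σ : ∀ v, D v)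
    {m : ℕ} (B : Fin m → Finset I)
    (hdisj : ∀ k l, k ≠ l → Disjoint (B k) (B l))
    (hcover : (Finset.univ : Finset I) = Finset.univ.biUnion B) :
    (⨆ d : D x, ∏ i : I, p i (Function.update σ x d))
      ≤ ∏ k : Fin m, ⨆ d : D x, ∏ i ∈ B k, p i (Function.update σ x d) := by
  refine ciSup_le fun d => ?_
  rw [hcover, Finset.prod_biUnion (fun k _ l _ h => hdisj k l h)]
  refine Finset.prod_le_prod' fun k _ => ?_
  exact le_ciSup (f := fun d : D x => ∏ i ∈ B k, p i (Function.update σ x d))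
    (Set.finite_range _).bddAbove d
end

section
/- Let D : Fin m → ℕ satisfy D j ≥ 1 for all j, let 1 ≤ s ≤ m, and let φ : Fin s → Fin m be strictly increasing with φ(s−1) = m−1. For every r < Π_{j < m} D j, letting v be the digit tuple with rank(v) = r, the lexicographic rank of the subtuple (v(φ 0), …, v(φ(s−1))) with respect to the radices D ∘ φ equals Σ_{k=0}^{s−2} ( Π_{j=k+1}^{s−1} D(φ j) ) · ( ⌊ r / Π_{j > φ(k)} D j ⌋ mod D(φ k) ) + ( r mod D(m−1) ). (Correctness of Equation (9), the index mapping from output bucket-table rows to input bucket-table rows used by the GPU aggregation kernel, where the input table's scope is a subsequence of the output table's scope sharing the same last variable.) -/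
theorem aux_prod_succ {m : ℕ} (D : Fin (m+1) → ℕ) (j : Fin m) :
    ∏ k ∈ Finset.univ.filter (fun k => j.succ < k), D k
      = ∏ k ∈ Finset.univ.filter (fun k => j < k), D k.succ := by
  rw [Finset.prod_filter, Finset.prod_filter, Fin.prod_univ_succ]
  simp

theorem aux_prod_zero {m : ℕ} (D : Fin (m+1) → ℕ) :
    ∏ k ∈ Finset.univ.filter (fun k => (0 : Fin (m+1)) < k), D k = ∏ k : Fin m, D k.succ := by
  rw [Finset.prod_filter, Fin.prod_univ_succ]
  simp

theorem aux_rank_succ {m : ℕ} (D v : Fin (m+1) → ℕ) :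
    ∑ j, v j * ∏ k ∈ Finset.univ.filter (fun k => j < k), D k
      = v 0 * (∏ k : Fin m, D k.succ)
        + ∑ j : Fin m, v j.succ * ∏ k ∈ Finset.univ.filter (fun k => j < k), D k.succ := by
  rw [Fin.sum_univ_succ, aux_prod_zero]
  simp only [aux_prod_succ]

theorem aux_rank_lt : ∀ {m : ℕ} (D v : Fin m → ℕ) (_ : ∀ j, v j < D j),
    ∑ j, v j * ∏ k ∈ Finset.univ.filter (fun k => j < k), D k < ∏ j, D j
  | 0, D, v, h => by simp
  | m+1, D, v, h => by
    rw [aux_rank_succ, Fin.prod_univ_succ]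
    have ih := aux_rank_lt (fun j : Fin m => D j.succ) (fun j => v j.succ) (fun j => h j.succ)
    have h0 := Nat.mul_le_mul_right (∏ k : Fin m, D k.succ) (Nat.succ_le_of_lt (h 0))
    rw [Nat.succ_mul] at h0
    omega

theorem aux_digit : ∀ {m : ℕ} (D v : Fin m → ℕ) (_ : ∀ j, v j < D j) (i : Fin m),
    ((∑ j, v j * ∏ k ∈ Finset.univ.filter (fun k => j < k), D k)
      / ∏ k ∈ Finset.univ.filter (fun k => i < k), D k) % D i = v i
  | 0, D, v, h, i => i.elim0
  | m+1, D, v, h, i => by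
    have hlt := aux_rank_lt (fun j : Fin m => D j.succ) (fun j => v j.succ) (fun j => h j.succ)
    rw [aux_rank_succ]
    refine Fin.cases ?_ (fun i => ?_) i
    · rw [aux_prod_zero, Nat.add_comm, Nat.add_mul_div_right _ _ (by omega),
        Nat.div_eq_of_lt hlt, Nat.zero_add, Nat.mod_eq_of_lt (h 0)]
    · have ih := aux_digit (fun j : Fin m => D j.succ) (fun j => v j.succ) (fun j => h j.succ) i
      rw [aux_prod_succ]
      have hpos : 0 < ∏ k ∈ Finset.univ.filter (fun k => i < k), D k.succ :=
        Finset.prod_pos (fun k _ => Nat.zero_lt_of_lt (h k.succ))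
      have hdvd : D i.succ * ∏ k ∈ Finset.univ.filter (fun k => i < k), D k.succ
          ∣ ∏ k : Fin m, D k.succ := by
        rw [← Finset.prod_insert (f := fun k : Fin m => D k.succ) (by simp)]
        exact Finset.prod_dvd_prod_of_subset _ _ _ (Finset.subset_univ _)
      obtain ⟨c, hc⟩ := hdvd
      rw [hc, Nat.add_comm, show ∀ a b p c : ℕ, a * (b * p * c) = (b * (a * c)) * p from
        fun a b p c => by ring, Nat.add_mul_div_right _ _ hpos, Nat.add_mul_mod_self_left]
      exact ih


/-- **Correctness of the GPU aggregation index mapping (Equation (9)).**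
Let `D : Fin m → ℕ` be radices with `D j ≥ 1`, `1 ≤ s ≤ m`, and let
`φ : Fin s → Fin m` be strictly increasing with `φ (s-1) = m-1` (the input table's
scope is a subsequence of the output table's scope sharing the same last variable).
For every output row index `r < Π_j D j`, letting `v` be the digit tuple of rank `r`,
the lexicographic rank of the subtuple `(v (φ 0), …, v (φ (s-1)))` with respect to
the radices `D ∘ φ` equals
`Σ_{k=0}^{s-2} (Π_{j=k+1}^{s-1} D (φ j)) · ((r / Π_{j > φ k} D j) % D (φ k)) + r % D (m-1)`. -/
theorem gpu_aggregate_index_mapping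
    (m s : ℕ) (D : Fin m → ℕ) (hD : ∀ j, 1 ≤ D j)
    (hs1 : 1 ≤ s) (hsm : s ≤ m)
    (φ : Fin s → Fin m) (hφ : StrictMono φ)
    (hlast : φ ⟨s - 1, by omega⟩ = ⟨m - 1, by omega⟩)
    (r : ℕ) (hr : r < ∏ j, D j)
    (v : ∀ j, Fin (D j))
    (hv : ∑ j, (v j : ℕ) * ∏ k ∈ Finset.univ.filter (fun k => j < k), D k = r) :
    (∑ k : Fin s, (v (φ k) : ℕ) * ∏ l ∈ Finset.univ.filter (fun l : Fin s => k < l), D (φ l))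
      = (∑ k : Fin (s - 1),
          (∏ j ∈ Finset.univ.filter (fun j : Fin s => (k : ℕ) < (j : ℕ)), D (φ j)) *
            ((r / ∏ j ∈ Finset.univ.filter
                (fun j : Fin m => φ (Fin.castLE (Nat.sub_le s 1) k) < j), D j)
              % D (φ (Fin.castLE (Nat.sub_le s 1) k))))
        + r % D ⟨m - 1, by omega⟩ := by

  have hdig := aux_digit D (fun j => (v j : ℕ)) (fun j => (v j).isLt)
  simp only [hv] at hdig
  obtain ⟨s, rfl⟩ : ∃ t, s = t + 1 := ⟨s - 1, by omega⟩
  have hl : r % D ⟨m - 1, by omega⟩ = v ⟨m - 1, by omega⟩ := by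
    rw [← hdig ⟨m - 1, by omega⟩, Finset.filter_false_of_mem, Finset.prod_empty, Nat.div_one]
    intro k _
    rw [Fin.lt_def]
    have := k.isLt
    simp only
    omega
  have hlast' : φ (Fin.last s) = ⟨m - 1, by omega⟩ := hlast
  simp only [hdig]
  rw [hl, Fin.sum_univ_castSucc, hlast']
  congr 1
  · refine Finset.sum_congr rfl (fun k _ => ?_)
    rw [Nat.mul_comm]
    rfl
  · rw [Finset.filter_false_of_mem, Finset.prod_empty, Nat.mul_one]
    intro k _
    exact not_lt.mpr (Fin.le_last k)
end

section
/- Let D : Fin (m+1) → ℕ satisfy D j ≥ 1 for all j, and let χ : Fin (Π_{j ≤ m} D j) → ℝ≥0∞ store a function f on digit tuples in lexicographic row order, i.e., χ(rank(v)) = f(v) for every digit tuple v. Then for every r < Π_{j < m} D j, min over d ∈ Fin (D m) of f(the extension of the rank-r tuple on the first m indices by last digit d) equals min_{0 ≤ ℓ < D m} χ(r · (D m) + ℓ). (Correctness of the GPU variable-elimination kernel, which replaces each block of D m consecutive cost entries by their minimum to eliminate the last variable.) -/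
open scoped ENNReal

/-- **Correctness of the GPU variable-elimination kernel.**
Let `D : Fin (m+1) → ℕ` be radices with `D j ≥ 1`, and let the cost array
`χ` store a function `f` on digit tuples in lexicographic row order, i.e.
`χ (rank v) = f v` for every digit tuple `v`.  Then for every `r < Π_{j < m} D j` and
the rank-`r` tuple `w` on the first `m` indices, the minimum over `d ∈ Fin (D m)` of
`f (extension of w by last digit d)` equals `min_{0 ≤ ℓ < D m} χ (r · (D m) + ℓ)`. -/
theorem gpu_eliminate_kernel_correct
    (m : ℕ) (D : Fin (m + 1) → ℕ) (hD : ∀ j, 1 ≤ D j)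
    (f : (∀ j, Fin (D j)) → ℝ≥0∞) (χ : ℕ → ℝ≥0∞)
    (hχ : ∀ v : ∀ j, Fin (D j),
      χ (∑ j, (v j : ℕ) * ∏ k ∈ Finset.univ.filter (fun k => j < k), D k) = f v) :
    ∀ r : ℕ, r < (∏ j : Fin m, D j.castSucc) →
      ∀ w : ∀ j : Fin m, Fin (D j.castSucc),
        (∑ j : Fin m, (w j : ℕ) *
            ∏ k ∈ Finset.univ.filter (fun k : Fin m => j < k), D k.castSucc) = r →
        (⨅ d : Fin (D (Fin.last m)), f (Fin.snoc w d))
          = ⨅ ℓ : Fin (D (Fin.last m)), χ (r * D (Fin.last m) + ℓ) := by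
  intro r _ w hw
  refine iInf_congr fun d => ?_
  rw [← hχ]
  congr 1
  rw [Fin.sum_univ_castSucc, ← hw, Finset.sum_mul]
  congr 1
  · refine Finset.sum_congr rfl fun j _ => ?_
    rw [Fin.snoc_castSucc, mul_assoc]
    congr 1
    rw [Finset.prod_filter, Finset.prod_filter, Fin.prod_univ_castSucc]
    simp [Fin.castSucc_lt_last]
  · rw [Fin.snoc_last, Finset.prod_filter]
    rw [Finset.prod_eq_one, mul_one]
    intro k _
    rw [if_neg (not_lt.mpr (Fin.le_last k))]
end
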